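/- Let n, μ, q1, A2, Mb, T be real constants with 0 < μ < 1, and let (x,y) be a point with r1 > 0, r2 > 0 (r1 = √((x+μ)² + y²), r2 = √((x+μ−1)² + y²)) at which both Ωx(x,y) = 0 and Ωy(x,y) = 0 and y ≠ 0. Then q1/r1³ = 1/r2³ + (3A2/2)/r2⁵. -/

import Mathlib

/-- At a triangular equilibrium point (Ωx = Ωy = 0, y ≠ 0) of the generalized
photogravitational Chermnykh problem one has q1/r1³ = 1/r2³ + (3A2/2)/r2⁵. -/
theorem triangular_point_relation
    (n μ q1 A2 Mb T x y : ℝ) (hμ0 : 0 < μ) (hμ1 : μ < 1)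
    (h1 : 0 < Real.sqrt ((x + μ) ^ 2 + y ^ 2))
    (h2 : 0 < Real.sqrt ((x + μ - 1) ^ 2 + y ^ 2))
    (hΩx : n ^ 2 * x
      - (1 - μ) * q1 * (x + μ) / Real.sqrt ((x + μ) ^ 2 + y ^ 2) ^ 3
      - μ * (x + μ - 1) / Real.sqrt ((x + μ - 1) ^ 2 + y ^ 2) ^ 3
      - 3 / 2 * μ * A2 * (x + μ - 1) / Real.sqrt ((x + μ - 1) ^ 2 + y ^ 2) ^ 5
      - Mb * x / Real.sqrt (x ^ 2 + y ^ 2 + T ^ 2) ^ 3 = 0)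
    (hΩy : n ^ 2 * y
      - (1 - μ) * q1 * y / Real.sqrt ((x + μ) ^ 2 + y ^ 2) ^ 3
      - μ * y / Real.sqrt ((x + μ - 1) ^ 2 + y ^ 2) ^ 3
      - 3 / 2 * μ * A2 * y / Real.sqrt ((x + μ - 1) ^ 2 + y ^ 2) ^ 5
      - Mb * y / Real.sqrt (x ^ 2 + y ^ 2 + T ^ 2) ^ 3 = 0)
    (hy : y ≠ 0) :
    q1 / Real.sqrt ((x + μ) ^ 2 + y ^ 2) ^ 3
      = 1 / Real.sqrt ((x + μ - 1) ^ 2 + y ^ 2) ^ 3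
        + (3 * A2 / 2) / Real.sqrt ((x + μ - 1) ^ 2 + y ^ 2) ^ 5 := by
  have hc : μ * (1 - μ) * y ≠ 0 :=
    mul_ne_zero (mul_ne_zero hμ0.ne' (sub_ne_zero.mpr hμ1.ne')) hy
  apply mul_left_cancel₀ hc
  simp only [div_eq_mul_inv] at hΩx hΩy ⊢
  -- In `x * Ωy - y * Ωx` the central terms `n` and `Mb` cancel, and what remains is
  -- `μ * (1 - μ) * y` times the difference of the two sides.
  linear_combination x * hΩy - y * hΩx
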